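/- arXiv:math/0402238 — 3 statements merged into one kernel-verified Lean document; each statement's English description precedes it below -/
import Mathlib

section
/- Let T > 0 and D > 0. For each i ∈ ℕ, let X_i be a nonempty set and for each t ∈ [0,T] let d_i(t) be a metric on X_i making (X_i, d_i(t)) a compact metric space. Assume: (a) diam(X_i, d_i(t)) ≤ D for all i and all t ∈ [0,T]; (b) for every ε > 0 there exists N(ε) ∈ ℕ such that every (X_i, d_i(0)) can be covered by N(ε) closed balls of radius ε; (c) for every δ > 0 there exists η > 0 such that whenever t₀, t₁ ∈ [0,T] satisfy |t₀ − t₁| < η, one has (1+δ)^{-1} d_i(t₀)(x,y) ≤ d_i(t₁)(x,y) ≤ (1+δ) d_i(t₀)(x,y) for all i and all x,y ∈ X_i. Then there exists a strictly increasing sequence of indices i_k and a one-parameter family of nonempty compact metric spaces (X(t), d(t)), t ∈ [0,T], such that for every t ∈ [0,T], the Gromov–Hausdorff distance between (X_{i_k}, d_{i_k}(t)) and (X(t), d(t)) tends to 0 as k → ∞. -/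
/-!
The isometry classes of the spaces `(X i, d i t)` all lie in one precompact subset of
Gromov–Hausdorff space: chaining the time comparison with `δ = 1` over finitely many short steps
gives a constant `C` with `d i t ≤ C * d i 0` (`exists_dist_le_mul`), so covers at time `0`, after
rescaling the radius by `C`, are covers at every time, and Gromov's criterion
`GromovHausdorff.totallyBounded` applies. Moreover, `(1 + δ)`-comparable metrics of diameter at
most `D` are at Gromov–Hausdorff distance at most `δ * D / 2` (`dist_ghPt_le`), so the curves
`t ↦ [(X i, d i t)]` are uniformly equicontinuous on `[0, T]`. The Arzelà–Ascoli theorem for curves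
in the complete space `GHSpace` gives a uniformly convergent subsequence; the limit family consists
of representatives of the values of the limit curve.
-/

/-- The point of Gromov–Hausdorff space associated to a nonempty compact metric space,
with the metric structure given explicitly. -/
noncomputable def ghPt (X : Type) (m : MetricSpace X)
    (hc : @CompactSpace X m.toPseudoMetricSpace.toUniformSpace.toTopologicalSpace)
    (hn : Nonempty X) : GromovHausdorff.GHSpace :=
  @GromovHausdorff.toGHSpace X m hc hn

open GromovHausdorff in
lemma toGHSpace_rep_isometryEquiv (X : Type) [MetricSpace X] [CompactSpace X] [Nonempty X] :
    Nonempty (X ≃ᵢ (toGHSpace X).Rep) := by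
  rw [← toGHSpace_eq_toGHSpace_iff_isometryEquiv, GHSpace.toGHSpace_rep]

open GromovHausdorff in
lemma diam_rep_toGHSpace (X : Type) [MetricSpace X] [CompactSpace X] [Nonempty X] :
    Metric.diam (Set.univ : Set (toGHSpace X).Rep) = Metric.diam (Set.univ : Set X) := by
  obtain ⟨e⟩ := toGHSpace_rep_isometryEquiv X
  exact e.diam_univ.symm

open GromovHausdorff in
lemma exists_cover_rep_toGHSpace (X : Type) [MetricSpace X] [CompactSpace X] [Nonempty X]
    {N : ℕ} {r : ℝ} (s : Finset X) (hs : s.card ≤ N) (h : ∀ x, ∃ y ∈ s, dist x y < r) :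
    ∃ s' : Set (toGHSpace X).Rep, Cardinal.mk s' ≤ N ∧ Set.univ ⊆ ⋃ x ∈ s', Metric.ball x r := by
  obtain ⟨e⟩ := toGHSpace_rep_isometryEquiv X
  refine ⟨e '' s, ?_, ?_⟩
  · refine Cardinal.mk_image_le.trans ?_
    exact (Cardinal.mk_coe_finset (s := s)).trans_le (by exact_mod_cast hs)
  · intro z _
    obtain ⟨y, hy, hd⟩ := h (e.symm z)
    refine Set.mem_biUnion (Set.mem_image_of_mem e hy) ?_
    rw [Metric.mem_ball, ← e.apply_symm_apply z, e.dist_eq]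
    exact hd

open GromovHausdorff in
/-- The identity map is an approximate isometry between two comparable metrics on a set. -/
lemma dist_ghPt_le {X : Type} (hn : Nonempty X) (m₀ m₁ : MetricSpace X)
    (hc₀ : @CompactSpace X m₀.toPseudoMetricSpace.toUniformSpace.toTopologicalSpace)
    (hc₁ : @CompactSpace X m₁.toPseudoMetricSpace.toUniformSpace.toTopologicalSpace) {ε : ℝ}
    (h : ∀ x y : X, |@dist X m₀.toPseudoMetricSpace.toDist x y
      - @dist X m₁.toPseudoMetricSpace.toDist x y| ≤ ε) :
    dist (ghPt X m₀ hc₀ hn) (ghPt X m₁ hc₁ hn) ≤ ε / 2 := by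
  have := @ghDist_le_of_approx_subsets X m₀ hc₀ hn X m₁ hc₁ hn Set.univ (fun x => x.1) 0 ε 0
    (fun x => ⟨x, Set.mem_univ x, (@dist_self X m₀.toPseudoMetricSpace x).le⟩)
    (fun x => ⟨⟨x, Set.mem_univ x⟩, (@dist_self X m₁.toPseudoMetricSpace x).le⟩)
    (fun x y => h x.1 y.1)
  simpa [ghDist, ghPt] using this

/-- A function on `[0, T]` that at most doubles over time steps shorter than `η` is bounded by a
multiple of its value at `0`, the constant depending only on `T` and `η`. -/
lemma exists_dist_le_mul (T η : ℝ) (hη : 0 < η) :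
    ∃ C : ℝ, 0 < C ∧ ∀ f : ℝ → ℝ,
      (∀ t₀ ∈ Set.Icc 0 T, ∀ t₁ ∈ Set.Icc 0 T, |t₀ - t₁| < η → f t₁ ≤ 2 * f t₀) →
      ∀ t ∈ Set.Icc 0 T, f t ≤ C * f 0 := by
  obtain ⟨n, hn⟩ := exists_nat_gt (T / η)
  refine ⟨2 ^ (n + 1), by positivity, fun f hf t ht => ?_⟩
  have key : ∀ n : ℕ, ∀ t ∈ Set.Icc 0 T, t < (n + 1) * η → f t ≤ 2 ^ (n + 1) * f 0 := by
    intro n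
    induction n with
    | zero =>
      intro t ht hlt
      have h0 : (0 : ℝ) ∈ Set.Icc 0 T := ⟨le_rfl, ht.1.trans ht.2⟩
      have := hf 0 h0 t ht (by rw [zero_sub, abs_neg, abs_of_nonneg ht.1]; simpa using hlt)
      simpa using this
    | succ n ih =>
      intro t ht hlt
      push_cast at hlt
      have hpos : (0 : ℝ) < n + 2 := by positivity
      -- The last step goes from `t - t / (n + 2)` to `t` and has length less than `η`.
      have hq : t / (n + 2) < η := by rw [div_lt_iff₀ hpos]; linarith
      have hq0 : 0 ≤ t / (n + 2) := div_nonneg ht.1 hpos.le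
      have hmul : t / (n + 2) * (n + 2) = t := div_mul_cancel₀ _ hpos.ne'
      have hnn : (0 : ℝ) ≤ n := n.cast_nonneg
      have ht' : t - t / (n + 2) ∈ Set.Icc 0 T := ⟨by nlinarith, by linarith [ht.2]⟩
      have h1 := ih _ ht' (by nlinarith)
      have h2 := hf _ ht' t ht (by
        rw [show t - t / (n + 2) - t = -(t / (n + 2)) by ring, abs_neg, abs_of_nonneg hq0]
        exact hq)
      rw [pow_succ]
      linarith
  refine key n t ht ?_
  rw [div_lt_iff₀ hη] at hn
  linarith [ht.2]

/-- Glickenstein-type compactness: a sequence of one-parameter families of compact metric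
spaces with uniformly bounded diameters, uniform total boundedness at time `0`, and
uniform `(1+δ)`-equicontinuity in the time variable, subconverges in the pointwise
Gromov–Hausdorff sense to a one-parameter family of nonempty compact metric spaces. -/
theorem glickenstein_compactness
    (T D : ℝ) (hT : 0 < T) (hD : 0 < D)
    (X : ℕ → Type) (hn : ∀ i, Nonempty (X i))
    (d : ∀ i, ℝ → MetricSpace (X i))
    (hc : ∀ i, ∀ t ∈ Set.Icc (0 : ℝ) T,
      @CompactSpace (X i) ((d i t).toPseudoMetricSpace.toUniformSpace.toTopologicalSpace))
    (hdiam : ∀ i, ∀ t ∈ Set.Icc (0 : ℝ) T,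
      @Metric.diam (X i) (d i t).toPseudoMetricSpace Set.univ ≤ D)
    (hcover : ∀ ε : ℝ, 0 < ε → ∃ N : ℕ, ∀ i, ∃ s : Finset (X i), s.card ≤ N ∧
      (Set.univ : Set (X i)) ⊆ ⋃ x ∈ s, @Metric.closedBall (X i) (d i 0).toPseudoMetricSpace x ε)
    (hequiv : ∀ δ : ℝ, 0 < δ → ∃ η : ℝ, 0 < η ∧
      ∀ t₀ ∈ Set.Icc (0 : ℝ) T, ∀ t₁ ∈ Set.Icc (0 : ℝ) T, |t₀ - t₁| < η → ∀ i, ∀ x y : X i,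
        (1 + δ)⁻¹ * @dist (X i) (d i t₀).toPseudoMetricSpace.toDist x y
            ≤ @dist (X i) (d i t₁).toPseudoMetricSpace.toDist x y ∧
        @dist (X i) (d i t₁).toPseudoMetricSpace.toDist x y
            ≤ (1 + δ) * @dist (X i) (d i t₀).toPseudoMetricSpace.toDist x y) :
    ∃ ik : ℕ → ℕ, StrictMono ik ∧
      ∃ (Y : ℝ → Type) (ρ : ∀ t, MetricSpace (Y t))
        (hnY : ∀ t, Nonempty (Y t))
        (hcY : ∀ t, @CompactSpace (Y t)
          ((ρ t).toPseudoMetricSpace.toUniformSpace.toTopologicalSpace)),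
        ∀ t, ∀ ht : t ∈ Set.Icc (0 : ℝ) T,
          Filter.Tendsto
            (fun k => dist (ghPt (X (ik k)) (d (ik k) t) (hc (ik k) t ht) (hn (ik k)))
              (ghPt (Y t) (ρ t) (hcY t) (hnY t)))
            Filter.atTop (nhds 0) := by
  classical
  -- All diameters are finite by compactness, so the diameter bound is a bound on distances.
  have hdist : ∀ i, ∀ t ∈ Set.Icc (0 : ℝ) T, ∀ x y : X i,
      @dist (X i) (d i t).toPseudoMetricSpace.toDist x y ≤ D := by
    intro i t ht x y
    let _ := d i t
    have := hc i t ht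
    exact (Metric.dist_le_diam_of_mem isCompact_univ.isBounded (Set.mem_univ x)
      (Set.mem_univ y)).trans (hdiam i t ht)
  let p : ℕ → Set.Icc (0 : ℝ) T → GromovHausdorff.GHSpace :=
    fun i t => ghPt (X i) (d i t) (hc i t t.2) (hn i)
  have hequi : ∀ ε > 0, ∃ η > 0, ∀ s t : Set.Icc (0 : ℝ) T, dist s t < η →
      ∀ i, dist (p i s) (p i t) < ε := by
    intro ε hε
    obtain ⟨η, hη, h⟩ := hequiv (ε / D) (by positivity)
    refine ⟨η, hη, fun s t hst i => ?_⟩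
    refine (dist_ghPt_le (hn i) _ _ _ _ (ε := ε) fun x y => ?_).trans_lt (half_lt_self hε)
    have h1 := (h s s.2 t t.2 hst i x y).2
    have h2 := (h t t.2 s s.2 ((dist_comm t s).trans_lt hst) i x y).2
    have h3 := mul_le_mul_of_nonneg_left (hdist i s s.2 x y) (div_pos hε hD).le
    have h4 := mul_le_mul_of_nonneg_left (hdist i t t.2 x y) (div_pos hε hD).le
    rw [div_mul_cancel₀ _ hD.ne'] at h3 h4
    rw [abs_le]
    constructor <;> linarith
  let S : Set GromovHausdorff.GHSpace := {q | ∃ i t, q = p i t}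
  have hS : IsCompact (closure S) := by
    obtain ⟨η, hη, h⟩ := hequiv 1 one_pos
    obtain ⟨C, hC, hCf⟩ := exists_dist_le_mul T η hη
    have hr : ∀ n : ℕ, (0 : ℝ) < 1 / ((n : ℝ) + 1) / (2 * C) := fun n => by positivity
    choose K hK using fun n : ℕ => hcover _ (hr n)
    refine (GromovHausdorff.totallyBounded (C := D) (K := K)
      tendsto_one_div_add_atTop_nhds_zero_nat ?_ ?_).closure.isCompact_of_isClosed
      isClosed_closure
    · rintro q ⟨i, t, rfl⟩
      let _ := d i t
      have := hc i t t.2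
      have := hn i
      exact (diam_rep_toGHSpace (X i)).trans_le (hdiam i t t.2)
    · rintro q ⟨i, t, rfl⟩ n
      obtain ⟨s, hs, hsc⟩ := hK n i
      refine @exists_cover_rep_toGHSpace (X i) (d i t) (hc i t t.2) (hn i) _ _ s hs fun x => ?_
      obtain ⟨y, hy, hxy⟩ := Set.mem_iUnion₂.1 (hsc (Set.mem_univ x))
      refine ⟨y, hy, ?_⟩
      have hxy' : @dist (X i) (d i 0).toPseudoMetricSpace.toDist x y
          ≤ 1 / ((n : ℝ) + 1) / (2 * C) := hxy
      have h1 := hCf (fun t => @dist (X i) (d i t).toPseudoMetricSpace.toDist x y)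
        (fun t₀ h₀ t₁ h₁ hlt => by
          have := (h t₀ h₀ t₁ h₁ hlt i x y).2
          rwa [one_add_one_eq_two] at this) t t.2
      have hu : (0 : ℝ) < 1 / ((n : ℝ) + 1) := by positivity
      calc @dist (X i) (d i t).toPseudoMetricSpace.toDist x y
          ≤ C * @dist (X i) (d i 0).toPseudoMetricSpace.toDist x y := h1
        _ ≤ C * (1 / ((n : ℝ) + 1) / (2 * C)) := mul_le_mul_of_nonneg_left hxy' hC.le
        _ = 1 / ((n : ℝ) + 1) / 2 := by field_simp
        _ < 1 / ((n : ℝ) + 1) := half_lt_self hu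
  have hcont : ∀ i, Continuous (p i) := fun i => by
    refine (Metric.uniformContinuous_iff.2 fun ε hε => ?_).continuous
    obtain ⟨η, hη, h⟩ := hequi ε hε
    exact ⟨η, hη, fun {a b} hab => h a b hab i⟩
  let F : ℕ → BoundedContinuousFunction (Set.Icc (0 : ℝ) T) GromovHausdorff.GHSpace :=
    fun i => BoundedContinuousFunction.mkOfCompact ⟨p i, hcont i⟩
  have hcpt : IsCompact (closure (Set.range F)) := by
    refine BoundedContinuousFunction.arzela_ascoli (closure S) hS _ ?_ ?_
    · rintro _ t ⟨i, rfl⟩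
      exact subset_closure ⟨i, t, rfl⟩
    · refine UniformEquicontinuous.equicontinuous (Metric.uniformEquicontinuous_iff.2 ?_)
      intro ε hε
      obtain ⟨η, hη, h⟩ := hequi ε hε
      refine ⟨η, hη, ?_⟩
      rintro s t hst ⟨_, i, rfl⟩
      exact h s t hst i
  obtain ⟨G, -, ik, hik, hlim⟩ :=
    hcpt.tendsto_subseq (x := F) fun i => subset_closure (Set.mem_range_self i)
  -- Outside `[0, T]` the limit family is constrained by nothing; the curve is extended constantly.
  let q : ℝ → GromovHausdorff.GHSpace := fun t => G (Set.projIcc 0 T hT.le t)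
  refine ⟨ik, hik, fun t => (q t).Rep, fun t => inferInstance, fun t => inferInstance,
    fun t => inferInstance, fun t ht => ?_⟩
  have hq : ghPt (q t).Rep inferInstance inferInstance inferInstance = G ⟨t, ht⟩ := by
    refine (GromovHausdorff.GHSpace.toGHSpace_rep (q t)).trans ?_
    simp only [q, Set.projIcc_of_mem hT.le ht]
  rw [hq]
  exact squeeze_zero (fun _ => dist_nonneg)
    (fun k => BoundedContinuousFunction.dist_coe_le_dist (f := F (ik k)) (g := G) ⟨t, ht⟩)
    (tendsto_iff_dist_tendsto_zero.1 hlim)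
end

section
/- Let L ≥ 1. For each i ∈ ℕ, let X_i be a nonempty set carrying two metrics d_i and d_i', each making X_i a compact metric space, and assume L^{-1} d_i(x,y) ≤ d_i'(x,y) ≤ L d_i(x,y) for all i and all x,y ∈ X_i. Suppose (X_i, d_i) converges in the Gromov–Hausdorff distance to a nonempty compact metric space (Y, ρ) and (X_i, d_i') converges in the Gromov–Hausdorff distance to a nonempty compact metric space (Y', ρ'). Then there exists a bijection F : Y → Y' satisfying L^{-1} ρ(x,y) ≤ ρ'(F(x), F(y)) ≤ L ρ(x,y) for all x,y ∈ Y; in particular, Y and Y' are homeomorphic. -/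
open Filter Topology

/-- The maps send a point of one space to a point at distance less than `ε` in the other one,
inside a common metric space realizing the Gromov–Hausdorff distance. -/
lemma exists_approx_isometries {X Y : Type} [MetricSpace X] [CompactSpace X] [Nonempty X]
    [MetricSpace Y] [CompactSpace Y] [Nonempty Y] {ε : ℝ}
    (h : dist (GromovHausdorff.toGHSpace X) (GromovHausdorff.toGHSpace Y) < ε) :
    ∃ (f : X → Y) (g : Y → X),
      (∀ x x', |dist (f x) (f x') - dist x x'| ≤ 2 * ε) ∧
      (∀ y y', |dist (g y) (g y') - dist y y'| ≤ 2 * ε) ∧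
      (∀ x, dist (g (f x)) x ≤ 2 * ε) ∧ (∀ y, dist (f (g y)) y ≤ 2 * ε) := by
  obtain ⟨Φ, Ψ, hΦ, hΨ, hd⟩ := GromovHausdorff.ghDist_eq_hausdorffDist X Y
  change GromovHausdorff.ghDist X Y < ε at h
  rw [hd] at h
  have hfin : Metric.hausdorffEDist (Set.range Φ) (Set.range Ψ) ≠ ⊤ :=
    Metric.hausdorffEDist_ne_top_of_nonempty_of_bounded (Set.range_nonempty _)
      (Set.range_nonempty _) (isCompact_range hΦ.continuous).isBounded
      (isCompact_range hΨ.continuous).isBounded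
  have h1 : ∀ x, ∃ y, dist (Φ x) (Ψ y) < ε := fun x => by
    obtain ⟨_, ⟨y, rfl⟩, hy⟩ :=
      Metric.exists_dist_lt_of_hausdorffDist_lt (Set.mem_range_self x) h hfin
    exact ⟨y, hy⟩
  have h2 : ∀ y, ∃ x, dist (Φ x) (Ψ y) < ε := fun y => by
    obtain ⟨_, ⟨x, rfl⟩, hx⟩ :=
      Metric.exists_dist_lt_of_hausdorffDist_lt' (Set.mem_range_self y) h hfin
    exact ⟨x, hx⟩
  choose f hf using h1
  choose g hg using h2
  refine ⟨f, g, fun x x' => ?_, fun y y' => ?_, fun x => ?_, fun y => ?_⟩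
  · rw [← hΦ.dist_eq, ← hΨ.dist_eq, abs_le]
    have a := hf x
    have b := hf x'
    have c := dist_triangle4 (Φ x) (Ψ (f x)) (Ψ (f x')) (Φ x')
    have e := dist_triangle4 (Ψ (f x)) (Φ x) (Φ x') (Ψ (f x'))
    rw [dist_comm (Ψ (f x')) (Φ x')] at c
    rw [dist_comm (Ψ (f x)) (Φ x)] at e
    constructor <;> linarith
  · rw [← hΦ.dist_eq, ← hΨ.dist_eq, abs_le]
    have a := hg y
    have b := hg y'
    have c := dist_triangle4 (Φ (g y)) (Ψ y) (Ψ y') (Φ (g y'))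
    have e := dist_triangle4 (Ψ y) (Φ (g y)) (Φ (g y')) (Ψ y')
    rw [dist_comm (Ψ y') (Φ (g y'))] at c
    rw [dist_comm (Ψ y) (Φ (g y))] at e
    constructor <;> linarith
  · rw [← hΦ.dist_eq]
    have c := dist_triangle_right (Φ (g (f x))) (Φ x) (Ψ (f x))
    linarith [hg (f x), hf x]
  · rw [← hΨ.dist_eq]
    have c := dist_triangle_left (Ψ (f (g y))) (Ψ y) (Φ (g y))
    linarith [hg y, hf (g y)]

/-- The bi-Lipschitz bijection `e : A ≃ B` stands for the identity map between two metrics on the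
same set. -/
lemma exists_approx_biLipschitz {A B Y Y' : Type}
    [MetricSpace A] [CompactSpace A] [Nonempty A] [MetricSpace B] [CompactSpace B] [Nonempty B]
    [MetricSpace Y] [CompactSpace Y] [Nonempty Y] [MetricSpace Y'] [CompactSpace Y'] [Nonempty Y']
    {L ε : ℝ} (hL : 1 ≤ L) (e : A ≃ B)
    (he : ∀ x y, L⁻¹ * dist x y ≤ dist (e x) (e y) ∧ dist (e x) (e y) ≤ L * dist x y)
    (h : dist (GromovHausdorff.toGHSpace A) (GromovHausdorff.toGHSpace Y) < ε)
    (h' : dist (GromovHausdorff.toGHSpace B) (GromovHausdorff.toGHSpace Y') < ε) :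
    ∃ (G : Y → Y') (H : Y' → Y),
      (∀ x y, L⁻¹ * dist x y - 6 * L * ε ≤ dist (G x) (G y) ∧
        dist (G x) (G y) ≤ L * dist x y + 6 * L * ε) ∧
      (∀ y, dist (G (H y)) y ≤ 6 * L * ε) := by
  have hε : 0 < ε := dist_nonneg.trans_lt h
  have hLε : ε ≤ L * ε := le_mul_of_one_le_left hε.le hL
  have hL0 : 0 < L := by linarith
  have hL1 : L⁻¹ ≤ 1 := inv_le_one_of_one_le₀ hL
  have hLi : 0 < L⁻¹ := inv_pos.2 hL0
  obtain ⟨f, g, hf, hg, hgf, hfg⟩ := exists_approx_isometries h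
  obtain ⟨f', g', hf', hg', hgf', hfg'⟩ := exists_approx_isometries h'
  refine ⟨fun y => f' (e (g y)), fun y => f (e.symm (g' y)), fun x y => ⟨?_, ?_⟩, fun y => ?_⟩
  · have a := (abs_le.1 (hf' (e (g x)) (e (g y)))).1
    have b := (he (g x) (g y)).1
    have c := mul_le_mul_of_nonneg_left (abs_le.1 (hg x y)).1 hLi.le
    have k : L⁻¹ * ε ≤ ε := mul_le_of_le_one_left hε.le hL1
    linarith
  · have a := (abs_le.1 (hf' (e (g x)) (e (g y)))).2
    have b := (he (g x) (g y)).2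
    have c := mul_le_mul_of_nonneg_left (abs_le.1 (hg x y)).2 hL0.le
    linarith
  · set a := e.symm (g' y) with ha
    have hea : e a = g' y := e.apply_symm_apply _
    have k1 := (abs_le.1 (hf' (e (g (f a))) (e a))).2
    have k2 := (he (g (f a)) a).2
    have k3 := mul_le_mul_of_nonneg_left (hgf a) hL0.le
    have k4 := hfg' y
    rw [← hea] at k4
    have k5 := dist_triangle (f' (e (g (f a)))) (f' (e a)) y
    linarith

lemma exists_biLipschitz_of_approx {Y Y' : Type}
    [MetricSpace Y] [CompactSpace Y] [MetricSpace Y'] [CompactSpace Y']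
    {L : ℝ} (hL : 1 ≤ L) {δ : ℕ → ℝ} (hδ : Tendsto δ atTop (𝓝 0))
    (G : ℕ → Y → Y') (H : ℕ → Y' → Y)
    (hG : ∀ i x y, L⁻¹ * dist x y - δ i ≤ dist (G i x) (G i y) ∧
      dist (G i x) (G i y) ≤ L * dist x y + δ i)
    (hGH : ∀ i y, dist (G i (H i y)) y ≤ δ i) :
    ∃ F : Y → Y', Function.Bijective F ∧ ∀ x y : Y,
      L⁻¹ * dist x y ≤ dist (F x) (F y) ∧ dist (F x) (F y) ≤ L * dist x y := by
  have hL0 : 0 < L := by linarith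
  let U : Ultrafilter ℕ := hyperfilter ℕ
  have hU : Tendsto δ U (𝓝 0) := hδ.mono_left Nat.hyperfilter_le_atTop
  have exF : ∀ y, ∃ z, Tendsto (fun i => G i y) U (𝓝 z) := fun y =>
    let ⟨z, _, hz⟩ := isCompact_univ.ultrafilter_le_nhds (U.map fun i => G i y) (by simp)
    ⟨z, hz⟩
  have exF' : ∀ y, ∃ z, Tendsto (fun i => H i y) U (𝓝 z) := fun y =>
    let ⟨z, _, hz⟩ := isCompact_univ.ultrafilter_le_nhds (U.map fun i => H i y) (by simp)
    ⟨z, hz⟩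
  choose F hF using exF
  choose F' hF' using exF'
  have bil : ∀ x y : Y,
      L⁻¹ * dist x y ≤ dist (F x) (F y) ∧ dist (F x) (F y) ≤ L * dist x y := fun x y => by
    have t := (hF x).dist (hF y)
    constructor
    · have := hU.const_sub (L⁻¹ * dist x y)
      rw [sub_zero] at this
      exact le_of_tendsto_of_tendsto' this t fun i => (hG i x y).1
    · have := hU.const_add (L * dist x y)
      rw [add_zero] at this
      exact le_of_tendsto_of_tendsto' t this fun i => (hG i x y).2
  refine ⟨F, ⟨fun x y hxy => ?_, fun y => ⟨F' y, ?_⟩⟩, bil⟩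
  · have h := (bil x y).1
    rw [hxy, dist_self] at h
    exact dist_le_zero.1 (nonpos_of_mul_nonpos_right h (inv_pos.2 hL0))
  · -- `G i (F' y)` tends to `F (F' y)`, and to `y` because it is close to `G i (H i y)`.
    refine tendsto_nhds_unique (hF (F' y)) (tendsto_iff_dist_tendsto_zero.2 ?_)
    have t : Tendsto (fun i => L * dist (F' y) (H i y) + δ i + δ i) U (𝓝 0) := by
      simpa using (((tendsto_const_nhds (x := F' y)).dist (hF' y)).const_mul L |>.add hU).add hU
    refine squeeze_zero (fun _ => dist_nonneg) (fun i => ?_) t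
    linarith [dist_triangle (G i (F' y)) (G i (H i y)) y, (hG i (F' y) (H i y)).2, hGH i y]

/-- If `(X_i, d_i) → (Y, ρ)` and `(X_i, d_i') → (Y', ρ')` in Gromov–Hausdorff distance,
where `d_i` and `d_i'` are uniformly `L`-bi-Lipschitz-equivalent metrics on the same sets,
then there is a bijection `Y → Y'` which is `L`-bi-Lipschitz; in particular `Y` and `Y'`
are homeomorphic. -/
theorem gh_limits_of_biLipschitz_equivalent_metrics
    (L : ℝ) (hL : 1 ≤ L)
    (X : ℕ → Type) (hn : ∀ i, Nonempty (X i))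
    (d d' : ∀ i, MetricSpace (X i))
    (hc : ∀ i, @CompactSpace (X i)
      ((d i).toPseudoMetricSpace.toUniformSpace.toTopologicalSpace))
    (hc' : ∀ i, @CompactSpace (X i)
      ((d' i).toPseudoMetricSpace.toUniformSpace.toTopologicalSpace))
    (hbil : ∀ i, ∀ x y : X i,
      L⁻¹ * @dist (X i) (d i).toPseudoMetricSpace.toDist x y
          ≤ @dist (X i) (d' i).toPseudoMetricSpace.toDist x y ∧
      @dist (X i) (d' i).toPseudoMetricSpace.toDist x y
          ≤ L * @dist (X i) (d i).toPseudoMetricSpace.toDist x y)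
    (Y Y' : Type) (hnY : Nonempty Y) (hnY' : Nonempty Y')
    (ρ : MetricSpace Y) (ρ' : MetricSpace Y')
    (hcY : @CompactSpace Y (ρ.toPseudoMetricSpace.toUniformSpace.toTopologicalSpace))
    (hcY' : @CompactSpace Y' (ρ'.toPseudoMetricSpace.toUniformSpace.toTopologicalSpace))
    (hconv : Filter.Tendsto
      (fun i => dist (ghPt (X i) (d i) (hc i) (hn i)) (ghPt Y ρ hcY hnY))
      Filter.atTop (nhds 0))
    (hconv' : Filter.Tendsto
      (fun i => dist (ghPt (X i) (d' i) (hc' i) (hn i)) (ghPt Y' ρ' hcY' hnY'))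
      Filter.atTop (nhds 0)) :
    (∃ F : Y → Y', Function.Bijective F ∧ ∀ x y : Y,
      L⁻¹ * @dist Y ρ.toPseudoMetricSpace.toDist x y
          ≤ @dist Y' ρ'.toPseudoMetricSpace.toDist (F x) (F y) ∧
      @dist Y' ρ'.toPseudoMetricSpace.toDist (F x) (F y)
          ≤ L * @dist Y ρ.toPseudoMetricSpace.toDist x y) ∧
    Nonempty (@Homeomorph Y Y' ρ.toPseudoMetricSpace.toUniformSpace.toTopologicalSpace
      ρ'.toPseudoMetricSpace.toUniformSpace.toTopologicalSpace) := by
  have key := fun i => @exists_approx_biLipschitz (X i) (X i) Y Y' (d i) (hc i) (hn i) (d' i) (hc' i)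
    (hn i) ρ hcY hnY ρ' hcY' hnY' L
    (max (dist (ghPt (X i) (d i) (hc i) (hn i)) (ghPt Y ρ hcY hnY))
      (dist (ghPt (X i) (d' i) (hc' i) (hn i)) (ghPt Y' ρ' hcY' hnY')) + 1 / ((i : ℝ) + 1))
    hL (Equiv.refl _) (hbil i)
    (lt_add_of_le_of_pos (le_max_left _ _) Nat.one_div_pos_of_nat)
    (lt_add_of_le_of_pos (le_max_right _ _) Nat.one_div_pos_of_nat)
  choose G H hG hGH using key
  have lim := ((hconv.max hconv').add tendsto_one_div_add_atTop_nhds_zero_nat).const_mul (6 * L)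
  simp only [max_self, add_zero, mul_zero] at lim
  obtain ⟨F, hF, hb⟩ := exists_biLipschitz_of_approx hL lim G H hG hGH
  refine ⟨⟨F, hF, hb⟩, ?_⟩
  have hlip : LipschitzWith L.toNNReal F := LipschitzWith.of_dist_le_mul fun x y => by
    rw [Real.coe_toNNReal L (by linarith)]
    exact (hb x y).2
  -- A continuous bijection from a compact space to a Hausdorff space is a homeomorphism.
  exact ⟨Continuous.homeoOfEquivCompactToT2 (f := Equiv.ofBijective F hF) hlip.continuous⟩
end

section
/- Let T > 0 and D > 0. For each i ∈ ℕ, let X_i be a nonempty set and for each t ∈ [0,T] let d_i(t) be a metric on X_i making (X_i, d_i(t)) a compact metric space. Assume: (a) diam(X_i, d_i(t)) ≤ D for all i and all t ∈ [0,T]; (b) for every ε > 0 there exists N(ε) ∈ ℕ such that every (X_i, d_i(0)) can be covered by N(ε) closed balls of radius ε; (c) for every δ > 0 there exists η > 0 such that whenever t₀, t₁ ∈ [0,T] satisfy |t₀ − t₁| < η, one has (1+δ)^{-1} d_i(t₀)(x,y) ≤ d_i(t₁)(x,y) ≤ (1+δ) d_i(t₀)(x,y) for all i and all x,y ∈ X_i.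 Then the set of isometry classes {(X_i, d_i(t)) : i ∈ ℕ, t ∈ [0,T]} has compact closure in the Gromov–Hausdorff space of isometry classes of nonempty compact metric spaces. -/
open GromovHausdorff

/-- A function on `[0, T]` that at most doubles over time steps shorter than `η` grows by a factor
at most `2 ^ n` up to time `n * (η / 2)`. -/
theorem dist_le_two_pow_mul {T η : ℝ} (hη : 0 < η) (f : ℝ → ℝ)
    (hf : ∀ s ∈ Set.Icc (0 : ℝ) T, ∀ t ∈ Set.Icc (0 : ℝ) T, |s - t| < η → f t ≤ 2 * f s)
    (n : ℕ) : ∀ t ∈ Set.Icc (0 : ℝ) T, t ≤ n * (η / 2) → f t ≤ 2 ^ n * f 0 := by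
  induction n with
  | zero =>
    intro t ht h
    have : t = 0 := le_antisymm (by simpa using h) ht.1
    simp [this]
  | succ n ih =>
    intro t ht h
    push_cast at h
    have hpos : 0 ≤ (n : ℝ) * (η / 2) := by positivity
    have hs : max 0 (t - η / 2) ∈ Set.Icc (0 : ℝ) T :=
      ⟨le_max_left _ _, max_le (ht.1.trans ht.2) (by linarith [ht.2])⟩
    have h1 := ih _ hs (max_le hpos (by linarith))
    have h2 := hf _ hs t ht (by
      rw [abs_lt]
      constructor
      · linarith [le_max_right 0 (t - η / 2)]
      · have : max 0 (t - η / 2) ≤ t := max_le ht.1 (by linarith)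
        linarith)
    rw [pow_succ]
    linarith

/-- The canonical representative of the class of `X` has the diameter of `X`, and covers of `X` by
balls carry over to it. -/
theorem rep_bounds (X : Type) [MetricSpace X] [CompactSpace X] [Nonempty X] :
    Metric.diam (Set.univ : Set (toGHSpace X).Rep) = Metric.diam (Set.univ : Set X) ∧
    ∀ (r : ℝ) (s : Finset X), (∀ y : X, ∃ x ∈ s, dist y x < r) →
      ∃ s' : Set (toGHSpace X).Rep, Cardinal.mk s' ≤ s.card ∧
        Set.univ ⊆ ⋃ x ∈ s', Metric.ball x r := by
  obtain ⟨e⟩ : Nonempty (X ≃ᵢ (toGHSpace X).Rep) :=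
    toGHSpace_eq_toGHSpace_iff_isometryEquiv.1 (toGHSpace X).toGHSpace_rep.symm
  refine ⟨e.diam_univ.symm, fun r s hs => ⟨e '' s, ?_, fun z _ => ?_⟩⟩
  · exact Cardinal.mk_image_le.trans (by simp)
  · obtain ⟨x, hx, hd⟩ := hs (e.symm z)
    refine Set.mem_biUnion (Set.mem_image_of_mem e hx) ?_
    rw [Metric.mem_ball, ← e.apply_symm_apply z, e.dist_eq]
    exact hd

/-- Precompactness of a two-parameter family: a sequence of one-parameter families of compact
metric spaces with uniformly bounded diameters, uniform total boundedness at time `0`, and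
uniform `(1+δ)`-equicontinuity in the time variable, has compact closure in the
Gromov–Hausdorff space. -/
theorem family_precompact_in_GHSpace
    (T D : ℝ) (hT : 0 < T) (hD : 0 < D)
    (X : ℕ → Type) (hn : ∀ i, Nonempty (X i))
    (d : ∀ i, ℝ → MetricSpace (X i))
    (hc : ∀ i, ∀ t ∈ Set.Icc (0 : ℝ) T,
      @CompactSpace (X i) ((d i t).toPseudoMetricSpace.toUniformSpace.toTopologicalSpace))
    (hdiam : ∀ i, ∀ t ∈ Set.Icc (0 : ℝ) T,
      @Metric.diam (X i) (d i t).toPseudoMetricSpace Set.univ ≤ D)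
    (hcover : ∀ ε : ℝ, 0 < ε → ∃ N : ℕ, ∀ i, ∃ s : Finset (X i), s.card ≤ N ∧
      (Set.univ : Set (X i)) ⊆ ⋃ x ∈ s, @Metric.closedBall (X i) (d i 0).toPseudoMetricSpace x ε)
    (hequiv : ∀ δ : ℝ, 0 < δ → ∃ η : ℝ, 0 < η ∧
      ∀ t₀ ∈ Set.Icc (0 : ℝ) T, ∀ t₁ ∈ Set.Icc (0 : ℝ) T, |t₀ - t₁| < η → ∀ i, ∀ x y : X i,
        (1 + δ)⁻¹ * @dist (X i) (d i t₀).toPseudoMetricSpace.toDist x y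
            ≤ @dist (X i) (d i t₁).toPseudoMetricSpace.toDist x y ∧
        @dist (X i) (d i t₁).toPseudoMetricSpace.toDist x y
            ≤ (1 + δ) * @dist (X i) (d i t₀).toPseudoMetricSpace.toDist x y) :
    IsCompact (closure
      {p : GromovHausdorff.GHSpace | ∃ i, ∃ t, ∃ ht : t ∈ Set.Icc (0 : ℝ) T,
        p = ghPt (X i) (d i t) (hc i t ht) (hn i)}) := by
  obtain ⟨η, hη, hstep⟩ := hequiv 1 one_pos
  obtain ⟨n, hn_large⟩ := exists_nat_gt (T / (η / 2))
  have hTn : T ≤ n * (η / 2) := ((div_lt_iff₀ (by positivity)).1 hn_large).le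
  have hC : (0 : ℝ) < 2 ^ n := by positivity
  have hdist : ∀ i, ∀ t ∈ Set.Icc (0 : ℝ) T, ∀ x y : X i,
      @dist (X i) (d i t).toPseudoMetricSpace.toDist x y
        ≤ 2 ^ n * @dist (X i) (d i 0).toPseudoMetricSpace.toDist x y := fun i t ht x y =>
    dist_le_two_pow_mul hη (fun t => @dist (X i) (d i t).toPseudoMetricSpace.toDist x y)
      (fun s hs t ht h => by
        have := (hstep s hs t ht h i x y).2
        norm_num at this
        exact this) n t ht (ht.2.trans hTn)
  choose! N hN using hcover
  refine TotallyBounded.isCompact_of_isClosed (TotallyBounded.closure ?_) isClosed_closure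
  -- The factor `1 / 2` turns closed balls into open balls of the radius the criterion requires.
  refine GromovHausdorff.totallyBounded (C := D)
    (K := fun k => N (1 / ((k : ℝ) + 1) / 2 / 2 ^ n))
    tendsto_one_div_add_atTop_nhds_zero_nat ?_ ?_
  · rintro p ⟨i, t, ht, rfl⟩
    let _ := d i t
    have := hc i t ht
    have := hn i
    exact (rep_bounds (X i)).1.le.trans (hdiam i t ht)
  · rintro p ⟨i, t, ht, rfl⟩ k
    have hk : (0 : ℝ) < 1 / ((k : ℝ) + 1) := by positivity
    obtain ⟨s, hcard, hs⟩ := hN (1 / ((k : ℝ) + 1) / 2 / 2 ^ n) (by positivity) i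
    have hs' : ∀ y : X i, ∃ x ∈ s,
        @dist (X i) (d i t).toPseudoMetricSpace.toDist y x < 1 / ((k : ℝ) + 1) := by
      intro y
      obtain ⟨x, hx, hy⟩ := Set.mem_iUnion₂.1 (hs (Set.mem_univ y))
      refine ⟨x, hx, (hdist i t ht y x).trans_lt ?_⟩
      have hy' : @dist (X i) (d i 0).toPseudoMetricSpace.toDist y x
          ≤ 1 / ((k : ℝ) + 1) / 2 / 2 ^ n := hy
      rw [le_div_iff₀ hC] at hy'
      linarith
    let _ := d i t
    have := hc i t ht
    have := hn i
    obtain ⟨s', hcard', hcov⟩ := (rep_bounds (X i)).2 _ s hs'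
    exact ⟨s', hcard'.trans (by exact_mod_cast hcard), hcov⟩
end
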